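/- arXiv:2011.14452 — 4 statements merged into one kernel-verified Lean document; each statement's English description precedes it below -/
import Mathlib

section
/- Sufficiency direction of Theorem 1 (kernel part, odd case): Let H be a real inner product space, D ≥ 1, a : ℝ^D → H an atom map, K ∈ ℕ, M = 2K + 1, θ_1, …, θ_M ∈ ℝ^D, λ_0 > 0, λ_1, …, λ_K > 0 and ω_1, …, ω_K ∈ ℝ^D. Assume the Gram matrix G of {a(θ_j)}_{j=1}^M is invertible and satisfies G(l, j) = λ_0 + Σ_{k=1}^K λ_k cos(⟨ω_k, θ_l − θ_j⟩) for all l, j. Define c_m(θ) = λ_0 + Σ_{k=1}^K λ_k cos(⟨ω_k, θ − θ_m⟩), v_m = Σ_{j=1}^M G⁻¹(m, j) a(θ_j), and h(θ) = Σ_{m=1}^M c_m(θ) v_m. Then ⟨h(θ), h(θ')⟩ = λ_0 + Σ_{k=1}^K λ_k cos(⟨ω_k, θ − θ'⟩) for all θ, θ' ∈ ℝ^D. -/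
open RealInnerProductSpace

/-!
The raised-cosine kernel is the Gram matrix of `2K + 1` trigonometric features
`1, cos ⟪ω k, t⟫, sin ⟪ω k, t⟫` under a diagonal form, so it factors as `A * B` through an index
type with as many elements as there are atoms. The dual vectors have Gram matrix `G⁻¹`, hence the
inner products of the vectors `h t` form the matrix `Cᴴ * G⁻¹ * C`, where `C` consists of the rows
of the kernel at the parameters `θ m`. The block `G` of the kernel is the product of a block of `A`
and a block of `B`; these are square, hence invertible as `G` is, and they cancel, leaving `A * B`.
-/

open Matrix
open scoped InnerProductSpace

section Skeleton

variable {R m n X Y : Type*} [CommRing R] [Fintype m] [DecidableEq m] [Fintype n]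

theorem mul_mul_inv_mul_eq_one_of_card_eq [DecidableEq n] (hcard : Fintype.card m = Fintype.card n)
    (P : Matrix m n R) (Q : Matrix n m R) (hPQ : IsUnit (P * Q).det) :
    Q * (P * Q)⁻¹ * P = 1 := by
  rw [← mul_eq_one_comm_of_card_eq m n R hcard, ← Matrix.mul_assoc]
  exact mul_nonsing_inv _ hPQ

theorem submatrix_mul_inv_mul_submatrix_eq_mul (hcard : Fintype.card m = Fintype.card n)
    (A : Matrix X n R) (B : Matrix n Y R) (r : m → X) (c : m → Y)
    (hAB : IsUnit ((A * B).submatrix r c).det) :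
    (A * B).submatrix id c * ((A * B).submatrix r c)⁻¹ * (A * B).submatrix r id = A * B := by
  classical
  let P := A.submatrix r id
  let Q := B.submatrix id c
  calc (A * B).submatrix id c * ((A * B).submatrix r c)⁻¹ * (A * B).submatrix r id
      = A * Q * (P * Q)⁻¹ * (P * B) := rfl
    _ = A * (Q * (P * Q)⁻¹ * P) * B := by simp only [Matrix.mul_assoc]
    _ = A * B := by rw [mul_mul_inv_mul_eq_one_of_card_eq hcard P Q hAB, Matrix.mul_one]

end Skeleton

section GramDual

variable {𝕜 H ι X : Type*} [RCLike 𝕜] [SeminormedAddCommGroup H] [InnerProductSpace 𝕜 H]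
  [Fintype ι]

theorem gram_sum_smul (b : ι → H) (A : Matrix ι X 𝕜) :
    gram 𝕜 (fun x => ∑ i, A i x • b i) = Aᴴ * gram 𝕜 b * A := by
  ext s t
  calc ⟪∑ i, A i s • b i, ∑ i, A i t • b i⟫_𝕜
      = star (A.col s) ⬝ᵥ gram 𝕜 b *ᵥ A.col t := (star_dotProduct_gram_mulVec b _ _).symm
    _ = (Aᴴ * (gram 𝕜 b * A)) s t := rfl
    _ = (Aᴴ * gram 𝕜 b * A) s t := by rw [Matrix.mul_assoc]

variable [DecidableEq ι]

variable (𝕜) in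
/-- The family dual to `b`: when the Gram matrix of `b` is invertible, these are the vectors of the
span of `b` with `⟪b i, gramDual 𝕜 b m⟫ = δ i m`. The coefficients are column `m` of the inverse
Gram matrix, as duality over `ℂ` demands; over `ℝ` they agree with its row `m`, used in the
paper. -/
noncomputable def gramDual (b : ι → H) (m : ι) : H :=
  ∑ j, (gram 𝕜 b)⁻¹ j m • b j

theorem gram_gramDual (b : ι → H) (hb : IsUnit (gram 𝕜 b).det) :
    gram 𝕜 (gramDual 𝕜 b) = (gram 𝕜 b)⁻¹ := by
  unfold gramDual
  rw [gram_sum_smul, (isHermitian_gram 𝕜 b).inv.eq, nonsing_inv_mul _ hb, Matrix.one_mul]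

theorem gramDual_real_eq_sum {H : Type*} [SeminormedAddCommGroup H] [InnerProductSpace ℝ H]
    (b : ι → H) (m : ι) : gramDual ℝ b m = ∑ j, (gram ℝ b)⁻¹ m j • b j :=
  Finset.sum_congr rfl fun j _ => by
    rw [← (isHermitian_gram ℝ b).inv.apply j m, star_trivial]

theorem gram_sum_smul_gramDual_of_factorization {n : Type*} [Fintype n]
    (hcard : Fintype.card ι = Fintype.card n) (A : Matrix X n 𝕜) (B : Matrix n X 𝕜)
    (hAB : (A * B).IsHermitian) (b : ι → H) (θ : ι → X) (hb : IsUnit (gram 𝕜 b).det)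
    (hgram : gram 𝕜 b = (A * B).submatrix θ θ) :
    gram 𝕜 (fun t => ∑ m, (A * B) (θ m) t • gramDual 𝕜 b m) = A * B := by
  have hrows : ((A * B).submatrix θ id)ᴴ = (A * B).submatrix id θ := by
    rw [conjTranspose_submatrix, hAB.eq]
  calc gram 𝕜 (fun t => ∑ m, (A * B) (θ m) t • gramDual 𝕜 b m)
      = ((A * B).submatrix θ id)ᴴ * gram 𝕜 (gramDual 𝕜 b) * (A * B).submatrix θ id :=
        gram_sum_smul _ ((A * B).submatrix θ id)
    _ = (A * B).submatrix id θ * ((A * B).submatrix θ θ)⁻¹ * (A * B).submatrix θ id := by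
        rw [gram_gramDual b hb, hrows, hgram]
    _ = A * B := submatrix_mul_inv_mul_submatrix_eq_mul hcard A B θ θ (hgram ▸ hb)

end GramDual

section RaisedCosine

variable {κ X : Type*}

/-- The raised-cosine kernel `lam0 + ∑ k, lam k * cos (φ k s - φ k t)`, as a matrix indexed by
parameters. The phases `φ k` are arbitrary real functions; the kernel of the paper has
`φ k = ⟪ω k, ·⟫`. -/
noncomputable def raisedCosineKernel [Fintype κ] (lam0 : ℝ) (lam : κ → ℝ) (φ : κ → X → ℝ) :
    Matrix X X ℝ :=
  Matrix.of fun s t => lam0 + ∑ k, lam k * Real.cos (φ k s - φ k t)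

/-- The trigonometric features `1`, `cos (φ k t)` and `sin (φ k t)` of the parameter `t`, one row
per parameter: `none` indexes the constant, the two summands the cosines and the sines. -/
noncomputable def trigFeatures (φ : κ → X → ℝ) : Matrix X (Option (κ ⊕ κ)) ℝ :=
  Matrix.of fun t n =>
    n.elim 1 (Sum.elim (fun k => Real.cos (φ k t)) fun k => Real.sin (φ k t))

variable [Fintype κ] (lam0 : ℝ) (lam : κ → ℝ) (φ : κ → X → ℝ)

theorem isHermitian_raisedCosineKernel : (raisedCosineKernel lam0 lam φ).IsHermitian :=
  .ext fun s t => by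
    simp only [raisedCosineKernel, of_apply, star_trivial, ← Real.cos_neg (φ _ t - _), neg_sub]

theorem raisedCosineKernel_eq_mul [DecidableEq κ] :
    raisedCosineKernel lam0 lam φ =
      trigFeatures φ * diagonal (fun n : Option (κ ⊕ κ) => n.elim lam0 (Sum.elim lam lam)) *
        (trigFeatures φ)ᵀ := by
  ext s t
  rw [mul_apply]
  simp only [raisedCosineKernel, trigFeatures, of_apply, mul_diagonal, transpose_apply,
    Fintype.sum_option, Fintype.sum_sum_type, Option.elim, Sum.elim_inl, Sum.elim_inr, one_mul,
    mul_one, Real.cos_sub, ← Finset.sum_add_distrib]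
  congr! 2
  ring

theorem gram_sum_raisedCosineKernel_smul_gramDual {H ι : Type*} [SeminormedAddCommGroup H]
    [InnerProductSpace ℝ H] [Fintype ι] [DecidableEq ι]
    (hcard : Fintype.card ι = 2 * Fintype.card κ + 1) (b : ι → H) (θ : ι → X)
    (hb : IsUnit (gram ℝ b).det)
    (hgram : gram ℝ b = (raisedCosineKernel lam0 lam φ).submatrix θ θ) :
    gram ℝ (fun t => ∑ m, raisedCosineKernel lam0 lam φ (θ m) t • gramDual ℝ b m) =
      raisedCosineKernel lam0 lam φ := by
  classical
  have hherm := isHermitian_raisedCosineKernel lam0 lam φ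
  have hcard' : Fintype.card ι = Fintype.card (Option (κ ⊕ κ)) := by
    rw [hcard, Fintype.card_option, Fintype.card_sum, two_mul]
  rw [raisedCosineKernel_eq_mul] at hgram hherm ⊢
  exact gram_sum_smul_gramDual_of_factorization hcard' _ _ hherm b θ hb hgram

end RaisedCosine

theorem lowrank_kernel_odd_general {H X ι κ : Type*} [SeminormedAddCommGroup H]
    [InnerProductSpace ℝ H] [Fintype ι] [DecidableEq ι] [Fintype κ]
    (hcard : Fintype.card ι = 2 * Fintype.card κ + 1)
    (b : ι → H) (θ : ι → X) (lam0 : ℝ) (lam : κ → ℝ) (φ : κ → X → ℝ)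
    (G : Matrix ι ι ℝ) (hG : ∀ l j, G l j = ⟪b l, b j⟫) (hGinv : IsUnit G.det)
    (hdecomp : ∀ l j, G l j = lam0 + ∑ k, lam k * Real.cos (φ k (θ l) - φ k (θ j)))
    (c : ι → X → ℝ)
    (hc : ∀ m t, c m t = lam0 + ∑ k, lam k * Real.cos (φ k t - φ k (θ m)))
    (v : ι → H) (hv : ∀ m, v m = ∑ j, G⁻¹ m j • b j)
    (h : X → H) (hh : ∀ t, h t = ∑ m, c m t • v m) (t t' : X) :
    ⟪h t, h t'⟫ = lam0 + ∑ k, lam k * Real.cos (φ k t - φ k t') := by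
  obtain rfl : G = gram ℝ b := Matrix.ext hG
  obtain rfl : v = gramDual ℝ b := funext fun m => by rw [hv, gramDual_real_eq_sum]
  have hc_kernel (m : ι) (t : X) : c m t = raisedCosineKernel lam0 lam φ (θ m) t :=
    (hc m t).trans ((isHermitian_raisedCosineKernel lam0 lam φ).apply (θ m) t)
  obtain rfl : h = fun t => ∑ m, raisedCosineKernel lam0 lam φ (θ m) t • gramDual ℝ b m :=
    funext fun t => by simp only [hh, hc_kernel]
  exact congr_fun₂ (gram_sum_raisedCosineKernel_smul_gramDual lam0 lam φ hcard b θ hGinv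
    (Matrix.ext hdecomp)) t t'

/-- **Sufficiency direction of Theorem 1 (kernel part, odd case `M = 2K+1`).**
If the Gram matrix of `M = 2K+1` atoms is invertible and admits a raised-cosine
decomposition with `λ₀ > 0` and `λ_k > 0`, then the low-rank approximation
`h θ = ∑ m, c m θ • v m` reproduces the same raised-cosine kernel everywhere. -/
theorem lowrank_kernel_odd
    {H : Type*} [NormedAddCommGroup H] [InnerProductSpace ℝ H]
    {D : ℕ} (hD : 1 ≤ D) {K : ℕ}
    (a : EuclideanSpace ℝ (Fin D) → H)
    (θ : Fin (2 * K + 1) → EuclideanSpace ℝ (Fin D))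
    (lam0 : ℝ) (hlam0 : 0 < lam0)
    (lam : Fin K → ℝ) (hlam : ∀ k, 0 < lam k)
    (ω : Fin K → EuclideanSpace ℝ (Fin D))
    (G : Matrix (Fin (2 * K + 1)) (Fin (2 * K + 1)) ℝ)
    (hG : ∀ l j, G l j = ⟪a (θ l), a (θ j)⟫)
    (hGinv : Invertible G)
    (hdecomp : ∀ l j, G l j = lam0 + ∑ k : Fin K, lam k * Real.cos ⟪ω k, θ l - θ j⟫)
    (c : Fin (2 * K + 1) → EuclideanSpace ℝ (Fin D) → ℝ)
    (hc : ∀ m t, c m t = lam0 + ∑ k : Fin K, lam k * Real.cos ⟪ω k, t - θ m⟫)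
    (v : Fin (2 * K + 1) → H)
    (hv : ∀ m, v m = ∑ j : Fin (2 * K + 1), G⁻¹ m j • a (θ j))
    (h : EuclideanSpace ℝ (Fin D) → H)
    (hh : ∀ t, h t = ∑ m : Fin (2 * K + 1), c m t • v m) :
    ∀ t t' : EuclideanSpace ℝ (Fin D),
      ⟪h t, h t'⟫ = lam0 + ∑ k : Fin K, lam k * Real.cos ⟪ω k, t - t'⟫ := by
  simp only [inner_sub_right] at hdecomp hc ⊢
  exact lowrank_kernel_odd_general (by simp) (a ∘ θ) θ lam0 lam (fun k t => ⟪ω k, t⟫) G hG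
    (isUnit_det_of_invertible G) hdecomp c hc v hv h hh
end

section
/- Dimension constraint (consistency of the parameters, odd bound): Let H be a real inner product space, D ≥ 1, K ∈ ℕ, λ_0, λ_1, …, λ_K ∈ ℝ and ω_1, …, ω_K ∈ ℝ^D. Suppose h : ℝ^D → H satisfies ⟨h(θ), h(θ')⟩ = λ_0 + Σ_{k=1}^K λ_k cos(⟨ω_k, θ − θ'⟩) for all θ, θ' ∈ ℝ^D. Then any family h(θ_1), …, h(θ_M) with M > 2K + 1 is linearly dependent in H; equivalently, if h(θ_1), …, h(θ_M) are linearly independent then M ≤ 2K + 1. -/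
open RealInnerProductSpace

/-!
By `cos (α - β) = cos α cos β + sin α sin β`, the Gram matrix factors as `F W Fᵀ`, where `W` is
diagonal and `F` has one constant column and a cosine and a sine column for each of the `K`
frequencies. Its rank is therefore at most `2 * K + 1`, whereas the Gram matrix of linearly
independent vectors has full rank.
-/

section GramMatrix

open scoped ComplexOrder

variable {𝕜 E ι : Type*} [RCLike 𝕜] [NormedAddCommGroup E] [InnerProductSpace 𝕜 E] [Fintype ι]

theorem rank_gram_of_linearIndependent {x : ι → E} (hx : LinearIndependent 𝕜 x) :
    (Matrix.gram 𝕜 x).rank = Fintype.card ι := by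
  classical
  exact Matrix.rank_of_isUnit _ (Matrix.posDef_gram_of_linearIndependent hx).isUnit

end GramMatrix

section RaisedCosine

open scoped Matrix

variable {ι κ : Type*} [Fintype κ]

/-- The raised-cosine kernel matrix of points `i : ι` with phases `φ i k`; in the parametric case
`φ i k = ⟪ω k, θ i⟫`. -/
noncomputable def raisedCosineMatrix (lam0 : ℝ) (lam : κ → ℝ) (φ : ι → κ → ℝ) : Matrix ι ι ℝ :=
  .of fun i j => lam0 + ∑ k, lam k * Real.cos (φ i k - φ j k)

/-- The matrix of trigonometric features of points with phases `φ i k`: row `i` consists of `1`,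
the cosines and the sines of the phases of `i`. -/
noncomputable def trigFeatureMatrix (φ : ι → κ → ℝ) : Matrix ι (Unit ⊕ κ ⊕ κ) ℝ :=
  .of fun i => Sum.elim 1 (Sum.elim (fun k => Real.cos (φ i k)) (fun k => Real.sin (φ i k)))

/-- The weights of the columns of `trigFeatureMatrix` in the raised-cosine kernel: `lam k` is
shared by the cosine and the sine of phase `k`. -/
def trigFeatureWeight (lam0 : ℝ) (lam : κ → ℝ) : Unit ⊕ κ ⊕ κ → ℝ :=
  Sum.elim (fun _ => lam0) (Sum.elim lam lam)

theorem raisedCosineMatrix_eq_mul_diagonal_mul_transpose [DecidableEq κ]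
    (lam0 : ℝ) (lam : κ → ℝ) (φ : ι → κ → ℝ) :
    raisedCosineMatrix lam0 lam φ =
      trigFeatureMatrix φ * Matrix.diagonal (trigFeatureWeight lam0 lam) *
        (trigFeatureMatrix φ)ᵀ := by
  ext i j
  rw [Matrix.mul_apply]
  simp only [raisedCosineMatrix, trigFeatureMatrix, trigFeatureWeight, Matrix.of_apply,
    Matrix.mul_diagonal, Matrix.transpose_apply, Fintype.sum_sum_type, Sum.elim_inl, Sum.elim_inr,
    Finset.univ_unique, Finset.sum_singleton, Pi.one_apply, one_mul, mul_one,
    ← Finset.sum_add_distrib]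
  congr! 2 with k
  rw [Real.cos_sub]
  ring

theorem rank_raisedCosineMatrix_le [Fintype ι] (lam0 : ℝ) (lam : κ → ℝ) (φ : ι → κ → ℝ) :
    (raisedCosineMatrix lam0 lam φ).rank ≤ 2 * Fintype.card κ + 1 := by
  classical
  calc (raisedCosineMatrix lam0 lam φ).rank
      ≤ (trigFeatureMatrix φ).rank := by
        rw [raisedCosineMatrix_eq_mul_diagonal_mul_transpose, Matrix.mul_assoc]
        exact Matrix.rank_mul_le_left _ _
    _ ≤ Fintype.card (Unit ⊕ κ ⊕ κ) := Matrix.rank_le_card_width _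
    _ = 2 * Fintype.card κ + 1 := by
        simp only [Fintype.card_sum, Fintype.card_unit]
        ring

theorem raisedCosine_linear_dependent_of_gt_general [Fintype ι]
    {H : Type*} [NormedAddCommGroup H] [InnerProductSpace ℝ H]
    (lam0 : ℝ) (lam : κ → ℝ) (φ : ι → κ → ℝ) (x : ι → H)
    (hx : ∀ i j, ⟪x i, x j⟫ = lam0 + ∑ k, lam k * Real.cos (φ i k - φ j k))
    (hcard : 2 * Fintype.card κ + 1 < Fintype.card ι) : ¬ LinearIndependent ℝ x := by
  intro hli
  have hgram : Matrix.gram ℝ x = raisedCosineMatrix lam0 lam φ := Matrix.ext hx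
  have hrank := rank_raisedCosineMatrix_le lam0 lam φ
  rw [← hgram, rank_gram_of_linearIndependent hli] at hrank
  exact hrank.not_gt hcard

end RaisedCosine

/-- **Dimension constraint (odd bound).** If the inner-product kernel of `h` is a
raised-cosine kernel with `K` cosine terms, then any family of more than `2K + 1`
atoms `h (θ j)` is linearly dependent. -/
theorem raisedCosine_linear_dependent_of_gt
    {H : Type*} [NormedAddCommGroup H] [InnerProductSpace ℝ H]
    {D : ℕ} (hD : 1 ≤ D) {K : ℕ}
    (lam0 : ℝ) (lam : Fin K → ℝ) (ω : Fin K → EuclideanSpace ℝ (Fin D))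
    (h : EuclideanSpace ℝ (Fin D) → H)
    (hker : ∀ t t' : EuclideanSpace ℝ (Fin D),
      ⟪h t, h t'⟫ = lam0 + ∑ k : Fin K, lam k * Real.cos ⟪ω k, t - t'⟫) :
    ∀ (M : ℕ) (θ : Fin M → EuclideanSpace ℝ (Fin D)),
      2 * K + 1 < M → ¬ LinearIndependent ℝ (fun j : Fin M => h (θ j)) := by
  intro M θ hM
  exact raisedCosine_linear_dependent_of_gt_general lam0 lam (fun j k => ⟪ω k, θ j⟫) _
    (fun i j => by simp only [hker, inner_sub_right]) (by simpa only [Fintype.card_fin] using hM)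
end

section
/- Dimension constraint (consistency of the parameters, even case): Let H be a real inner product space, D ≥ 1, K ∈ ℕ, λ_1, …, λ_K ∈ ℝ and ω_1, …, ω_K ∈ ℝ^D. Suppose h : ℝ^D → H satisfies ⟨h(θ), h(θ')⟩ = Σ_{k=1}^K λ_k cos(⟨ω_k, θ − θ'⟩) for all θ, θ' ∈ ℝ^D (i.e., the raised-cosine kernel with offset λ_0 = 0). Then any family h(θ_1), …, h(θ_M) with M > 2K is linearly dependent in H; equivalently, if h(θ_1), …, h(θ_M) are linearly independent then M ≤ 2K. -/
open RealInnerProductSpace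

/-! In `ℂ`, regarded as a real plane, `cos (x - y)` is the real inner product of `exp (x * I)` and
`exp (y * I)`, so the inner product of a fixed atom with a varying one is a real-linear function of
a vector of `ℂ ^ K` attached to the latter. Taking inner products with all the atoms is injective
on their span, hence linearly independent atoms yield linearly independent vectors of `ℂ ^ K`,
whose real dimension is `2 * K`. -/

section Gram

variable {𝕜 H ι : Type*} [RCLike 𝕜] [NormedAddCommGroup H] [InnerProductSpace 𝕜 H]

theorem linearIndependent_col_gram_iff {v : ι → H} :
    LinearIndependent 𝕜 (Matrix.gram 𝕜 v).col ↔ LinearIndependent 𝕜 v := by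
  let innerWithFamily : H →ₗ[𝕜] ι → 𝕜 := LinearMap.pi fun j => innerₛₗ 𝕜 (v j)
  have span_le_ker_orthogonal :
      Submodule.span 𝕜 (Set.range v) ≤ (LinearMap.ker innerWithFamily)ᗮ :=
    Submodule.span_le.mpr <| Set.range_subset_iff.mpr fun j _ hx =>
      inner_eq_zero_symm.mp (congrFun hx j)
  exact ⟨fun h => h.of_comp innerWithFamily, fun h =>
    h.map ((Submodule.orthogonal_disjoint _).symm.mono_left span_le_ker_orthogonal)⟩

theorem linearIndependent_of_inner_eq_dual {V : Type*} [AddCommGroup V] [Module 𝕜 V]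
    {v : ι → H} {φ : ι → V} (ℓ : ι → Module.Dual 𝕜 V)
    (hℓ : ∀ i j, inner 𝕜 (v j) (v i) = ℓ j (φ i)) (hv : LinearIndependent 𝕜 v) :
    LinearIndependent 𝕜 φ := by
  have hcol : (Matrix.gram 𝕜 v).col = LinearMap.pi ℓ ∘ φ := by
    ext i j
    exact hℓ i j
  exact .of_comp (LinearMap.pi ℓ) (hcol ▸ linearIndependent_col_gram_iff.mpr hv)

end Gram

theorem inner_exp_mul_I_eq_cos_sub (x y : ℝ) :
    ⟪Complex.exp (x * Complex.I), Complex.exp (y * Complex.I)⟫ = Real.cos (x - y) := by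
  rw [real_inner_comm]
  simp [Complex.inner, Complex.exp_ofReal_mul_I_re, Complex.exp_ofReal_mul_I_im, Real.cos_sub]

theorem raisedCosine_zeroOffset_linear_dependent_of_gt_general
    {H ι κ : Type*} [NormedAddCommGroup H] [InnerProductSpace ℝ H] [Fintype κ]
    (lam : κ → ℝ) (phase : ι → κ → ℝ) (v : ι → H)
    (hv : ∀ i j, ⟪v i, v j⟫ = ∑ k, lam k * Real.cos (phase i k - phase j k))
    (hcard : 2 * Fintype.card κ < ENat.card ι) : ¬ LinearIndependent ℝ v := by
  intro hli
  let φ (i : ι) (k : κ) : ℂ := Complex.exp (phase i k * Complex.I)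
  let ℓ (j : ι) : Module.Dual ℝ (κ → ℂ) := ∑ k, lam k • innerₗ ℂ (φ j k) ∘ₗ LinearMap.proj k
  have hℓ : ∀ i j, ⟪v j, v i⟫ = ℓ j (φ i) := fun i j =>
    calc ⟪v j, v i⟫ = ∑ k, lam k * ⟪φ j k, φ i k⟫ := by
          simp only [hv, φ, inner_exp_mul_I_eq_cos_sub]
      _ = ℓ j (φ i) := by
          simp only [ℓ, LinearMap.sum_apply, LinearMap.smul_apply, LinearMap.comp_apply,
            LinearMap.proj_apply, innerₗ_apply_apply, smul_eq_mul]
  have hφ : LinearIndependent ℝ φ := linearIndependent_of_inner_eq_dual ℓ hℓ hli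
  have hle : ENat.card ι ≤ 2 * Fintype.card κ := by
    simpa [mul_comm] using (linearIndepOn_univ_iff.mpr hφ).encard_le_toENat_rank
  exact hcard.not_ge hle

/-- **Dimension constraint (even case, zero offset).** If the inner-product kernel of
`h` is a raised-cosine kernel with `K` cosine terms and zero offset (`λ₀ = 0`), then
any family of more than `2K` atoms `h (θ j)` is linearly dependent. -/
theorem raisedCosine_zeroOffset_linear_dependent_of_gt
    {H : Type*} [NormedAddCommGroup H] [InnerProductSpace ℝ H]
    {D : ℕ} (hD : 1 ≤ D) {K : ℕ}
    (lam : Fin K → ℝ) (ω : Fin K → EuclideanSpace ℝ (Fin D))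
    (h : EuclideanSpace ℝ (Fin D) → H)
    (hker : ∀ t t' : EuclideanSpace ℝ (Fin D),
      ⟪h t, h t'⟫ = ∑ k : Fin K, lam k * Real.cos ⟪ω k, t - t'⟫) :
    ∀ (M : ℕ) (θ : Fin M → EuclideanSpace ℝ (Fin D)),
      2 * K < M → ¬ LinearIndependent ℝ (fun j : Fin M => h (θ j)) := by
  intro M θ hM
  exact raisedCosine_zeroOffset_linear_dependent_of_gt_general lam (fun j k => ⟪ω k, θ j⟫) _
    (fun i j => by simp only [hker, inner_sub_right]) (by simpa using mod_cast hM)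
end

section
/- Necessary parity constraint on the offset: Let H be a real inner product space, D ≥ 1, K ∈ ℕ, λ_0, λ_1, …, λ_K ∈ ℝ with λ_k ≥ 0 for all k, and ω_1, …, ω_K ∈ ℝ^D. Suppose h : ℝ^D → H satisfies ⟨h(θ), h(θ')⟩ = λ_0 + Σ_{k=1}^K λ_k cos(⟨ω_k, θ − θ'⟩) for all θ, θ', and suppose there exist θ_1, …, θ_M ∈ ℝ^D with M = 2K + 1 such that h(θ_1), …, h(θ_M) are linearly independent. Then λ_0 > 0. -/
open RealInnerProductSpace

/-!
Write `C k g = ∑ i, g i cos (φ k i)` and `S k g = ∑ i, g i sin (φ k i)`. Expanding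
`cos (φ k i - φ k j)` diagonalizes the Gram form of the atoms:
`‖∑ i, g i • v i‖² = c₀ (∑ i, g i)² + ∑ k, c k ((C k g)² + (S k g)²)`.
The `2K` linear functionals `C k` and `S k` have a common nonzero zero `g` as soon as there are
more than `2K` atoms. For such `g` only `c₀ (∑ i, g i)²` survives on the right, while the left side
is positive by linear independence.
-/

lemma sum_sum_mul_cos_sub {ι : Type*} (s : Finset ι) (g φ : ι → ℝ) :
    ∑ i ∈ s, ∑ j ∈ s, g i * g j * Real.cos (φ i - φ j) =
      (∑ i ∈ s, g i * Real.cos (φ i)) ^ 2 + (∑ i ∈ s, g i * Real.sin (φ i)) ^ 2 := by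
  simp only [sq, Finset.sum_mul_sum, ← Finset.sum_add_distrib, Real.cos_sub]
  refine Finset.sum_congr rfl fun i _ => Finset.sum_congr rfl fun j _ => ?_
  ring

lemma norm_sq_sum_smul_of_inner_eq_raisedCosine {H ι κ : Type*} [SeminormedAddCommGroup H]
    [InnerProductSpace ℝ H] [Fintype κ] {c₀ : ℝ} {c : κ → ℝ} {φ : κ → ι → ℝ} {v : ι → H}
    (hv : ∀ i j, ⟪v i, v j⟫ = c₀ + ∑ k, c k * Real.cos (φ k i - φ k j))
    (s : Finset ι) (g : ι → ℝ) :
    ‖∑ i ∈ s, g i • v i‖ ^ 2 = c₀ * (∑ i ∈ s, g i) ^ 2 +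
      ∑ k, c k * ((∑ i ∈ s, g i * Real.cos (φ k i)) ^ 2 +
        (∑ i ∈ s, g i * Real.sin (φ k i)) ^ 2) := by
  have hconst : ∑ i ∈ s, ∑ j ∈ s, g i * g j * c₀ = c₀ * (∑ i ∈ s, g i) ^ 2 := by
    simp only [← Finset.sum_mul, ← Finset.sum_mul_sum, sq, mul_comm c₀]
  have hcos : ∑ i ∈ s, ∑ j ∈ s, g i * g j * ∑ k, c k * Real.cos (φ k i - φ k j) =
      ∑ k, c k * ∑ i ∈ s, ∑ j ∈ s, g i * g j * Real.cos (φ k i - φ k j) := by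
    simp only [Finset.mul_sum, mul_left_comm (c _)]
    exact Finset.sum_comm_cycle
  calc ‖∑ i ∈ s, g i • v i‖ ^ 2
      = ∑ i ∈ s, ∑ j ∈ s, g i * g j * ⟪v i, v j⟫ := by
        rw [← real_inner_self_eq_norm_sq, sum_inner]
        simp only [inner_sum, real_inner_smul_left, real_inner_smul_right, mul_left_comm,
          mul_assoc]
    _ = c₀ * (∑ i ∈ s, g i) ^ 2 +
        ∑ k, c k * ∑ i ∈ s, ∑ j ∈ s, g i * g j * Real.cos (φ k i - φ k j) := by
        simp only [hv, mul_add, Finset.sum_add_distrib, hconst, hcos]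
    _ = _ := by simp only [sum_sum_mul_cos_sub]

lemma exists_ne_zero_sum_mul_cos_eq_zero_and_sum_mul_sin_eq_zero {ι κ : Type*} [Fintype ι]
    [Fintype κ] (hcard : 2 * Fintype.card κ < Fintype.card ι) (φ : κ → ι → ℝ) :
    ∃ g : ι → ℝ, g ≠ 0 ∧
      ∀ k, ∑ i, g i * Real.cos (φ k i) = 0 ∧ ∑ i, g i * Real.sin (φ k i) = 0 := by
  let A : Matrix (κ ⊕ κ) ι ℝ :=
    Matrix.fromRows (fun k i => Real.cos (φ k i)) (fun k i => Real.sin (φ k i))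
  have hker : A.mulVecLin.ker ≠ ⊥ := LinearMap.ker_ne_bot_of_finrank_lt <| by
    rwa [Module.finrank_fintype_fun_eq_card, Module.finrank_fintype_fun_eq_card,
      Fintype.card_sum, ← two_mul]
  obtain ⟨g, hg, hg0⟩ := (Submodule.ne_bot_iff _).1 hker
  have hA (r : κ ⊕ κ) : ∑ i, g i * A r i = 0 :=
    (dotProduct_comm g (A r)).trans (congrFun hg r)
  exact ⟨g, hg0, fun k => ⟨hA (.inl k), hA (.inr k)⟩⟩

theorem raisedCosine_offset_pos_of_odd_linearIndependent_general {H ι κ : Type*}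
    [NormedAddCommGroup H] [InnerProductSpace ℝ H] [Fintype ι] [Fintype κ]
    (hcard : 2 * Fintype.card κ < Fintype.card ι) {c₀ : ℝ} {c : κ → ℝ} {φ : κ → ι → ℝ}
    {v : ι → H} (hv : ∀ i j, ⟪v i, v j⟫ = c₀ + ∑ k, c k * Real.cos (φ k i - φ k j))
    (hli : LinearIndependent ℝ v) :
    0 < c₀ := by
  obtain ⟨g, hg, hφ⟩ := exists_ne_zero_sum_mul_cos_eq_zero_and_sum_mul_sin_eq_zero hcard φ
  have hne : ∑ i, g i • v i ≠ 0 := fun h =>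
    hg (funext (Fintype.linearIndependent_iff.1 hli g h))
  have hnorm : ‖∑ i, g i • v i‖ ^ 2 = c₀ * (∑ i, g i) ^ 2 := by
    simp [norm_sq_sum_smul_of_inner_eq_raisedCosine hv, hφ]
  have hpos : 0 < c₀ * (∑ i, g i) ^ 2 := hnorm ▸ pow_pos (norm_pos_iff.2 hne) 2
  exact pos_of_mul_pos_left hpos (sq_nonneg _)

/-- **Necessary parity constraint on the offset.** If the inner-product kernel of `h`
is a raised-cosine kernel with nonnegative coefficients and there exist `M = 2K + 1`
parameters whose atoms `h (θ j)` are linearly independent, then the offset `λ₀` must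
be strictly positive. -/
theorem raisedCosine_offset_pos_of_odd_linearIndependent
    {H : Type*} [NormedAddCommGroup H] [InnerProductSpace ℝ H]
    {D : ℕ} (hD : 1 ≤ D) {K : ℕ}
    (lam0 : ℝ) (hlam0 : 0 ≤ lam0)
    (lam : Fin K → ℝ) (hlam : ∀ k, 0 ≤ lam k)
    (ω : Fin K → EuclideanSpace ℝ (Fin D))
    (h : EuclideanSpace ℝ (Fin D) → H)
    (hker : ∀ t t' : EuclideanSpace ℝ (Fin D),
      ⟪h t, h t'⟫ = lam0 + ∑ k : Fin K, lam k * Real.cos ⟪ω k, t - t'⟫)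
    (θ : Fin (2 * K + 1) → EuclideanSpace ℝ (Fin D))
    (hli : LinearIndependent ℝ (fun j : Fin (2 * K + 1) => h (θ j))) :
    0 < lam0 :=
  raisedCosine_offset_pos_of_odd_linearIndependent_general
    (c := lam) (φ := fun k j => ⟪ω k, θ j⟫) (by simp)
    (fun i j => by simp only [hker, inner_sub_right]) hli
end
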